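/- Let φ(v) denote the 2×2 complex matrix [[1, v],[0, 1]], and let S ⊆ M₂(ℂ) × ℂ be the set S = { ( φ(v⁻¹) · [[a, 0],[0, a⁻¹]] · φ(−v⁻¹) , v ) : a ∈ ℂ, a ≠ 0, v ∈ ℂ, v ≠ 0 }. Then the fibre over 0 of the closure of S equals the set of all unipotent upper triangular matrices together with their negatives; that is, { M ∈ M₂(ℂ) : (M, 0) ∈ closure(S) } = { φ(u) : u ∈ ℂ } ∪ { −φ(u) : u ∈ ℂ }. -/

import Mathlib

/-!
Conjugating `diag(a, a⁻¹)` by `φ(v⁻¹)` gives `[[a, u], [0, a⁻¹]]` with `v * u = a⁻¹ - a`, so for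
`v ≠ 0` the family is cut out by polynomial equations that make sense at `v = 0` too, where they
read `a = a⁻¹`, i.e. `a = ±1`, with `u` free. Every such point is a limit of the family: if `u ≠ 0`,
keep `u` fixed and move `a` towards `±1`, which determines `v = (a⁻¹ - a) / u`; if `u = 0`, keep `a`
fixed and move `v`.
-/

open Matrix

/-- `φ(v) = [[1, v], [0, 1]]`, the unipotent upper triangular matrices. -/
def phi (v : ℂ) : Matrix (Fin 2) (Fin 2) ℂ := !![1, v; 0, 1]

/-- The set `S = { (φ(v⁻¹) · diag(a, a⁻¹) · φ(-v⁻¹), v) : a ≠ 0, v ≠ 0 }`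
of pairs (conjugated torus element, parameter). -/
def conjTorusFamily : Set (Matrix (Fin 2) (Fin 2) ℂ × ℂ) :=
  {q | ∃ a v : ℂ, a ≠ 0 ∧ v ≠ 0 ∧
    q = (phi v⁻¹ * !![a, 0; 0, a⁻¹] * phi (-v⁻¹), v)}

open Filter Topology

section Algebra

/-- The unipotent upper triangular matrix `φ(x)` over an arbitrary commutative ring; for `R = ℂ` it
is `phi` by definition. -/
def upperUnipotent {R : Type*} [CommRing R] (x : R) : Matrix (Fin 2) (Fin 2) R := !![1, x; 0, 1]

/-- The affine variety of pairs `(M, v)` with `M` upper triangular of determinant one and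
`v * M₀₁ = M₁₁ - M₀₀`. It extends the family of conjugated tori over the parameter `v = 0`. -/
def conjTorusVariety (R : Type*) [CommRing R] : Set (Matrix (Fin 2) (Fin 2) R × R) :=
  {q | q.1 1 0 = 0 ∧ q.1 0 0 * q.1 1 1 = 1 ∧ q.2 * q.1 0 1 = q.1 1 1 - q.1 0 0}

theorem upperUnipotent_mul_diag_mul_upperUnipotent_neg {R : Type*} [CommRing R] (a b x : R) :
    upperUnipotent x * !![a, 0; 0, b] * upperUnipotent (-x) = !![a, x * (b - a); 0, b] := by
  have h₀₁ : a * -x + x * b = x * (b - a) := by ring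
  simpa [upperUnipotent] using h₀₁

variable {K : Type*} [Field K]

variable (K) in
/-- The family of conjugates `φ(v⁻¹) 𝔗 φ(-v⁻¹)`, `v ≠ 0`, of the diagonal torus `𝔗` of `SL₂(K)`,
as a subset of `M₂(K) × K`; for `K = ℂ` it is `conjTorusFamily` by definition. -/
def conjTorusFamilyOver : Set (Matrix (Fin 2) (Fin 2) K × K) :=
  {q | ∃ a v : K, a ≠ 0 ∧ v ≠ 0 ∧
    q = (upperUnipotent v⁻¹ * !![a, 0; 0, a⁻¹] * upperUnipotent (-v⁻¹), v)}

theorem mk_mem_conjTorusVariety_iff {M : Matrix (Fin 2) (Fin 2) K} {v : K} :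
    (M, v) ∈ conjTorusVariety K ↔
      ∃ a u : K, a ≠ 0 ∧ v * u = a⁻¹ - a ∧ M = !![a, u; 0, a⁻¹] := by
  constructor
  · rintro ⟨h₁₀, hdet, hv⟩
    have h₁₁ : M 1 1 = (M 0 0)⁻¹ := eq_inv_of_mul_eq_one_right hdet
    refine ⟨M 0 0, M 0 1, left_ne_zero_of_mul_eq_one hdet, h₁₁ ▸ hv, ?_⟩
    rw [← h₁₁, ← h₁₀]
    exact M.eta_fin_two
  · rintro ⟨a, u, ha, hu, rfl⟩
    exact ⟨rfl, mul_inv_cancel₀ ha, hu⟩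

theorem mk_mem_conjTorusFamilyOver_iff {M : Matrix (Fin 2) (Fin 2) K} {v : K} :
    (M, v) ∈ conjTorusFamilyOver K ↔ v ≠ 0 ∧ (M, v) ∈ conjTorusVariety K := by
  rw [mk_mem_conjTorusVariety_iff]
  constructor
  · rintro ⟨a, w, ha, hw, h⟩
    obtain ⟨rfl, rfl⟩ := Prod.mk.inj h
    exact ⟨hw, a, v⁻¹ * (a⁻¹ - a), ha, mul_inv_cancel_left₀ hw _,
      upperUnipotent_mul_diag_mul_upperUnipotent_neg a a⁻¹ v⁻¹⟩
  · rintro ⟨hv, a, u, ha, hu, rfl⟩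
    refine ⟨a, v, ha, hv, ?_⟩
    rw [upperUnipotent_mul_diag_mul_upperUnipotent_neg, ← hu, inv_mul_cancel_left₀ hv]

theorem mk_zero_mem_conjTorusVariety_iff {M : Matrix (Fin 2) (Fin 2) K} :
    (M, 0) ∈ conjTorusVariety K ↔
      (∃ u, M = upperUnipotent u) ∨ ∃ u, M = -upperUnipotent u := by
  rw [mk_mem_conjTorusVariety_iff]
  constructor
  · rintro ⟨a, u, ha, hu, rfl⟩
    have ha_inv : a⁻¹ = a := by rwa [zero_mul, eq_comm, sub_eq_zero] at hu
    rcases inv_eq_self₀.mp ha_inv with rfl | rfl | rfl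
    · exact .inr ⟨-u, by simp [upperUnipotent]⟩
    · exact absurd rfl ha
    · exact .inl ⟨u, by simp [upperUnipotent]⟩
  · rintro (⟨u, rfl⟩ | ⟨u, rfl⟩)
    · exact ⟨1, u, by simp [upperUnipotent]⟩
    · exact ⟨-1, -u, by simp [upperUnipotent]⟩

end Algebra

section Topology

theorem isClosed_conjTorusVariety {R : Type*} [CommRing R] [TopologicalSpace R]
    [IsTopologicalRing R] [T2Space R] : IsClosed (conjTorusVariety R) := by
  have continuous_entry (i j : Fin 2) :
      Continuous fun q : Matrix (Fin 2) (Fin 2) R × R ↦ q.1 i j :=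
    continuous_fst.matrix_elem i j
  exact (isClosed_eq (continuous_entry 1 0) continuous_const).inter <|
    (isClosed_eq ((continuous_entry 0 0).mul (continuous_entry 1 1)) continuous_const).inter <|
    isClosed_eq (continuous_snd.mul (continuous_entry 0 1))
      ((continuous_entry 1 1).sub (continuous_entry 0 0))

variable {K : Type*} [Field K] [TopologicalSpace K]

theorem eventually_nhdsNE_ne_zero_and_inv_ne_self [T1Space K] (a : K) :
    ∀ᶠ b in 𝓝[≠] a, b ≠ 0 ∧ b⁻¹ ≠ b := by
  have finite_exceptions : ({-1, 0, 1} : Set K).Finite := Set.toFinite _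
  filter_upwards [nhdsNE_le_cofinite a finite_exceptions.compl_mem_cofinite] with b hb
  have hb' : ¬(b = -1 ∨ b = 0 ∨ b = 1) := hb
  exact ⟨fun h ↦ hb' (.inr (.inl h)), inv_eq_self₀.not.mpr hb'⟩

theorem tendsto_mk_inv_sub_div_nhds [IsTopologicalDivisionRing K] {a : K} (ha : a ≠ 0)
    (ha_inv : a⁻¹ = a) (u : K) :
    Tendsto (fun b : K ↦ (!![b, u; 0, b⁻¹], (b⁻¹ - b) / u)) (𝓝 a)
      (𝓝 (!![a, u; 0, a⁻¹], 0)) := by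
  have tendsto_inv : Tendsto (fun b : K ↦ b⁻¹) (𝓝 a) (𝓝 a⁻¹) := tendsto_inv₀ ha
  refine Tendsto.prodMk_nhds ?_ ?_
  · refine tendsto_pi_nhds.mpr fun i ↦ tendsto_pi_nhds.mpr fun j ↦ ?_
    fin_cases i <;> fin_cases j
    exacts [tendsto_id, tendsto_const_nhds, tendsto_const_nhds, tendsto_inv]
  · simpa [ha_inv] using (tendsto_inv.sub tendsto_id).div_const u

variable [PerfectSpace K]

theorem mk_diag_zero_mem_closure_conjTorusFamilyOver {a : K} (ha : a ≠ 0) (ha_inv : a⁻¹ = a) :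
    (!![a, 0; 0, a⁻¹], 0) ∈ closure (conjTorusFamilyOver K) := by
  have tendsto_curve : Tendsto (fun v : K ↦ (!![a, 0; 0, a⁻¹], v)) (𝓝[≠] 0)
      (𝓝 (!![a, 0; 0, a⁻¹], 0)) :=
    (Continuous.prodMk_right _).continuousAt.tendsto.mono_left nhdsWithin_le_nhds
  refine mem_closure_of_tendsto tendsto_curve ?_
  filter_upwards [self_mem_nhdsWithin] with v hv
  exact mk_mem_conjTorusFamilyOver_iff.mpr
    ⟨hv, mk_mem_conjTorusVariety_iff.mpr ⟨a, 0, ha, by simp [ha_inv], rfl⟩⟩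

variable [IsTopologicalDivisionRing K] [T2Space K]

theorem mk_zero_mem_closure_conjTorusFamilyOver {a u : K} (ha : a ≠ 0) (ha_inv : a⁻¹ = a) :
    (!![a, u; 0, a⁻¹], 0) ∈ closure (conjTorusFamilyOver K) := by
  rcases eq_or_ne u 0 with rfl | hu
  · exact mk_diag_zero_mem_closure_conjTorusFamilyOver ha ha_inv
  refine mem_closure_of_tendsto
    ((tendsto_mk_inv_sub_div_nhds ha ha_inv u).mono_left (nhdsWithin_le_nhds (s := {a}ᶜ))) ?_
  filter_upwards [eventually_nhdsNE_ne_zero_and_inv_ne_self a] with b ⟨hb, hb_inv⟩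
  exact mk_mem_conjTorusFamilyOver_iff.mpr ⟨div_ne_zero (sub_ne_zero.mpr hb_inv) hu,
    mk_mem_conjTorusVariety_iff.mpr ⟨b, u, hb, div_mul_cancel₀ _ hu, rfl⟩⟩

theorem closure_conjTorusFamilyOver : closure (conjTorusFamilyOver K) = conjTorusVariety K := by
  refine (closure_minimal ?_ isClosed_conjTorusVariety).antisymm ?_
  · rintro ⟨M, v⟩ h
    exact (mk_mem_conjTorusFamilyOver_iff.mp h).2
  · rintro ⟨M, v⟩ h
    rcases ne_or_eq v 0 with hv | rfl
    · exact subset_closure (mk_mem_conjTorusFamilyOver_iff.mpr ⟨hv, h⟩)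
    · obtain ⟨a, u, ha, hu, rfl⟩ := mk_mem_conjTorusVariety_iff.mp h
      have ha_inv : a⁻¹ = a := by rwa [zero_mul, eq_comm, sub_eq_zero] at hu
      exact mk_zero_mem_closure_conjTorusFamilyOver ha ha_inv

theorem fibre_at_zero_of_closure_general :
    {M : Matrix (Fin 2) (Fin 2) K | (M, 0) ∈ closure (conjTorusFamilyOver K)}
      = {M | ∃ u : K, M = upperUnipotent u} ∪ {M | ∃ u : K, M = -upperUnipotent u} := by
  ext M
  rw [Set.mem_ofPred_eq, closure_conjTorusFamilyOver]
  exact mk_zero_mem_conjTorusVariety_iff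

end Topology

/-- The fibre over `0` of the closure of the family `𝓗` of conjugated tori is
`𝔘 ∪ (-𝔘)`: the unipotent upper triangular matrices together with their negatives. -/
theorem fibre_at_zero_of_closure :
    {M : Matrix (Fin 2) (Fin 2) ℂ | (M, 0) ∈ closure conjTorusFamily}
      = {M | ∃ u : ℂ, M = phi u} ∪ {M | ∃ u : ℂ, M = -phi u} :=
  fibre_at_zero_of_closure_general
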